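/- Assume K ≥ 2. For a multi-index α ∈ ℕ^d, let e_{11} and e_{12} denote the multi-indices with a single 1 in positions (j,k) = (1,1) and (1,2) respectively (so e_{12} corresponds to the first coordinate of the second block), and define ν(α) = | √( ω₂(α) ω₂(α + e_{11} − e_{12}) / ω₂(α − e_{12})² ) − √( ω₂(α + e_{11})² / ( ω₂(α) ω₂(α + e_{11} − e_{12}) ) ) | when α_{12} ≥ 1, and ν(α) = 0 when α_{12} = 0. Then for every real p > 0, the series ∑_{α ∈ ℕ^d} ν(α)^p converges if and only if p > d. -/

import Mathlib

/-!
Write `α = β + e_y`, with `x`, `y` the two distinguished coordinates, lying in different blocks.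
Put `ρ_z(β) = ω₂(β + e_z) / ω₂(β)`. The only part of `ω₂` that couples different blocks is the
factor `1 / Γ(T + 1)` with `T = ∑_k s_k`, so `ν` collapses to (`nuTwo_inc`)

  `ν(β + e_y) = √(ρ_x(β) ρ_y(β)) · (1 - R)`,  `R = Γ(S+u) Γ(S+v) / (Γ(S) Γ(S+u+v))`,

where `S = T(β) + 1` and `u, v` are the increments of `T` along `e_x`, `e_y`.

The defect `1 - R` is of exact order `1/S` (`defect_upper`, `defect_lower`). The upper bound is a
secant-slope estimate from log-convexity of `Γ`. For the lower bound, `Γ(x+1) = x Γ(x)` shows that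
`R(S+1)/R(S) = 1 + uv / (S(S+u+v))`; since `R ≤ 1` always, multiplying about `S` of these factors
gives `1/R(S) ≥ 1 + c/S`.

Each `ρ_z` is a product of quotients of the increasing function `w ↦ Γ(w+h)/Γ(w)`, which is
comparable with `w^h`. Hence `ρ_z ≤ 1` everywhere, and `ρ_z` is bounded below when all coordinates
of `β` are of the same order of magnitude (`rho_ge`).

So `ν(α) ≤ C / (α_i + 1)` for every `i`, and `ν^q` is dominated by `∏_i (C/(α_i+1))^(q/d)`,
which is summable for `q > d`. On the other hand `ν ≥ c/N` on the box `[N, 2N)^d`, so for `q ≤ d`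
these boxes contribute at least `N^d (c/N)^q ≥ c^q` for arbitrarily large `N`, which contradicts
the Cauchy criterion.
-/


/-- `ω₂(α)`: the squared `L²` norm of the monomial `z^α` on the generalized egg domain
`Ω₂ = {z : ∑_k (∑_j |z_{jk}|^{2 p_{jk}})^{a_k} < 1}`. -/
noncomputable def omegaTwo (K : ℕ) (m : Fin K → ℕ) (p : (k : Fin K) → Fin (m k) → ℝ)
    (a : Fin K → ℝ) (α : (Σ k : Fin K, Fin (m k)) → ℕ) : ℝ :=
  (Real.pi ^ (∑ k, m k) / ∏ k, ∏ j, p k j) * (1 / ∏ k, a k) *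
    (∏ k, (∏ j, Real.Gamma (((α ⟨k, j⟩ : ℝ) + 1) / p k j)) /
      Real.Gamma (∑ j, ((α ⟨k, j⟩ : ℝ) + 1) / p k j)) *
    ((∏ k, Real.Gamma (∑ j, ((α ⟨k, j⟩ : ℝ) + 1) / (a k * p k j))) /
      Real.Gamma (∑ k, ∑ j, ((α ⟨k, j⟩ : ℝ) + 1) / (a k * p k j))) /
    (∑ k, ∑ j, ((α ⟨k, j⟩ : ℝ) + 1) / (a k * p k j))

/-- `ν(α)`: the eigenvalue of `√([M_{z_x}, M_{z_y}*][M_{z_x}, M_{z_y}*]*)` at the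
normalized monomial `z^α/√ω₂(α)`; `x` and `y` are two distinguished coordinates. -/
noncomputable def nuTwo (K : ℕ) (m : Fin K → ℕ) (p : (k : Fin K) → Fin (m k) → ℝ)
    (a : Fin K → ℝ) (x y : Σ k : Fin K, Fin (m k)) (α : (Σ k : Fin K, Fin (m k)) → ℕ) : ℝ :=
  if α y = 0 then 0
  else
    |Real.sqrt (omegaTwo K m p a α *
          omegaTwo K m p a (Function.update (Function.update α x (α x + 1)) y (α y - 1)) /
          (omegaTwo K m p a (Function.update α y (α y - 1))) ^ 2)
      - Real.sqrt ((omegaTwo K m p a (Function.update α x (α x + 1))) ^ 2 /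
          (omegaTwo K m p a α *
            omegaTwo K m p a
              (Function.update (Function.update α x (α x + 1)) y (α y - 1))))|

/-! ### Quotients of Gamma values -/

/-- The quotient `Γ(w + h) / Γ(w)`, as a function of `w` for a fixed shift `h`. -/
noncomputable def gr (h w : ℝ) : ℝ := Real.Gamma (w + h) / Real.Gamma w

lemma gr_pos {h w : ℝ} (hh : 0 < h) (hw : 0 < w) : 0 < gr h w :=
  div_pos (Real.Gamma_pos_of_pos (by positivity)) (Real.Gamma_pos_of_pos hw)

lemma gr_succ {h w : ℝ} (hh : 0 < h) (hw : 0 < w) :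
    gr h (w + 1) = gr h w * ((w + h) / w) := by
  have h1 := (Real.Gamma_pos_of_pos hw).ne'
  unfold gr
  rw [show w + 1 + h = (w + h) + 1 by ring, Real.Gamma_add_one (by positivity),
    Real.Gamma_add_one hw.ne']
  field_simp

lemma log_gr {h w : ℝ} (hh : 0 < h) (hw : 0 < w) :
    Real.log (gr h w) = (Real.log ∘ Real.Gamma) (w + h) - (Real.log ∘ Real.Gamma) w :=
  Real.log_div (Real.Gamma_pos_of_pos (by positivity)).ne' (Real.Gamma_pos_of_pos hw).ne'

/-- Monotonicity of `w ↦ Γ(w+h)/Γ(w)`, i.e. log-convexity of `Γ`. -/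
lemma gr_mono {h w u : ℝ} (hh : 0 < h) (hw : 0 < w) (hu : 0 < u) : gr h w ≤ gr h (w + u) := by
  rw [← Real.log_le_log_iff (gr_pos hh hw) (gr_pos hh (by positivity)), log_gr hh hw,
    log_gr hh (by positivity)]
  have hc := Real.convexOn_log_Gamma
  have key : ∀ s t : ℝ, 0 < s → 0 < t → s + t = 1 →
      (Real.log ∘ Real.Gamma) (s * w + t * (w + u + h)) ≤
      s * (Real.log ∘ Real.Gamma) w + t * (Real.log ∘ Real.Gamma) (w + u + h) := by
    intro s t hs ht hst
    exact hc.2 (Set.mem_Ioi.2 hw) (Set.mem_Ioi.2 (by positivity)) hs.le ht.le hst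
  have hs : u / (u + h) + h / (u + h) = 1 := by field_simp
  have k1 := key (u / (u + h)) (h / (u + h)) (by positivity) (by positivity) hs
  have k2 := key (h / (u + h)) (u / (u + h)) (by positivity) (by positivity) (by linarith)
  rw [show u / (u + h) * w + h / (u + h) * (w + u + h) = w + h by field_simp; ring] at k1
  rw [show h / (u + h) * w + u / (u + h) * (w + u + h) = w + u by field_simp; ring] at k2
  have e : u / (u + h) = 1 - h / (u + h) := by linarith
  rw [e] at k1 k2
  linarith

lemma gr_mono' {h w w' : ℝ} (hh : 0 < h) (hw : 0 < w) (hw' : w ≤ w') : gr h w ≤ gr h w' := by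
  rcases hw'.eq_or_lt with rfl | hlt
  · exact le_rfl
  · simpa using gr_mono hh hw (sub_pos.2 hlt)

/-- Secant-slope comparison with the step `[w, w+n]`, `n = ⌈h⌉₊ + 1`. -/
lemma gr_le {h w : ℝ} (hh : 0 < h) (hw : 0 < w) :
    gr h w ≤ (w + (⌈h⌉₊ + 1 : ℕ)) ^ h := by
  set n : ℕ := ⌈h⌉₊ + 1 with hn
  have hhn : h < n := by
    have := Nat.le_ceil h
    rw [hn]; push_cast; linarith
  have hn0 : (0 : ℝ) < n := by linarith
  have hc := Real.convexOn_log_Gamma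
  have hs := hc.secant_mono (a := w) (x := w + h) (y := w + n) (Set.mem_Ioi.2 hw)
    (Set.mem_Ioi.2 (by positivity)) (Set.mem_Ioi.2 (by positivity)) (by linarith) (by linarith)
    (by linarith)
  have tele : ∀ k : ℕ, k ≤ n → (Real.log ∘ Real.Gamma) (w + k) - (Real.log ∘ Real.Gamma) w ≤
      k * Real.log (w + n) := by
    intro k
    induction k with
    | zero => intro _; simp
    | succ k ih =>
      intro hk
      have := ih (by omega)
      have hk' : (k : ℝ) ≤ n := by exact_mod_cast (by omega : k ≤ n)
      have e : (Real.log ∘ Real.Gamma) (w + (k + 1 : ℕ)) =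
          Real.log (w + k) + (Real.log ∘ Real.Gamma) (w + k) := by
        have h0 : 0 < w + k := by positivity
        simp only [Function.comp]
        rw [← Real.log_mul h0.ne' (Real.Gamma_pos_of_pos h0).ne', ← Real.Gamma_add_one h0.ne']
        push_cast
        ring_nf
      have l : Real.log (w + k) ≤ Real.log (w + n) :=
        Real.log_le_log (by positivity) (by linarith)
      rw [e]; push_cast; linarith
  have t := tele n le_rfl
  have : Real.log (gr h w) ≤ h * Real.log (w + n) := by
    rw [log_gr hh hw]
    rw [show w + h - w = h by ring, show w + n - w = n by ring, div_le_iff₀ hh] at hs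
    refine hs.trans ?_
    rw [mul_comm h]
    gcongr
    rw [div_le_iff₀ hn0]; linarith
  rw [← Real.log_rpow (by positivity)] at this
  exact (Real.log_le_log_iff (gr_pos hh hw) (by positivity)).1 this

lemma le_gr {h w : ℝ} (hh : 0 < h) (hw : 0 < w) :
    w ^ h * (w / (w + h)) ≤ gr h w := by
  have hc := Real.convexOn_log_Gamma
  have hs := hc.slope_mono_adjacent (x := w) (y := w + 1) (z := w + 1 + h) (Set.mem_Ioi.2 hw)
    (Set.mem_Ioi.2 (by positivity)) (by linarith) (by linarith)
  have e : (Real.log ∘ Real.Gamma) (w + 1) = Real.log w + (Real.log ∘ Real.Gamma) w := by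
    simp only [Function.comp]
    rw [← Real.log_mul hw.ne' (Real.Gamma_pos_of_pos hw).ne', ← Real.Gamma_add_one hw.ne']
  have : h * Real.log w ≤ Real.log (gr h (w + 1)) := by
    rw [log_gr hh (by positivity)]
    rw [show w + 1 - w = 1 by ring, show w + 1 + h - (w + 1) = h by ring, le_div_iff₀ hh, div_one,
      show (Real.log ∘ Real.Gamma) (w + 1) - (Real.log ∘ Real.Gamma) w = Real.log w by
        linarith] at hs
    linarith
  rw [← Real.log_rpow hw] at this
  have := (Real.log_le_log_iff (by positivity) (gr_pos hh (by positivity))).1 this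
  rw [gr_succ hh hw] at this
  calc w ^ h * (w / (w + h)) ≤ (gr h w * ((w + h) / w)) * (w / (w + h)) := by gcongr
    _ = gr h w := by field_simp

lemma gr_le_rpow {h w₀ : ℝ} (hh : 0 < h) (hw₀ : 0 < w₀) :
    ∃ C > 0, ∀ w, w₀ ≤ w → gr h w ≤ C * w ^ h := by
  refine ⟨(1 + (⌈h⌉₊ + 1 : ℕ) / w₀) ^ h, by positivity, fun w hw => ?_⟩
  have hw' : 0 < w := hw₀.trans_le hw
  rw [← Real.mul_rpow (by positivity) hw'.le]
  refine (gr_le hh hw').trans ?_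
  gcongr
  rw [add_mul, one_mul, div_mul_eq_mul_div, mul_div_assoc]
  gcongr
  exact le_mul_of_one_le_right (by positivity) ((one_le_div hw₀).2 hw)

lemma rpow_le_gr {h w₀ : ℝ} (hh : 0 < h) (hw₀ : 0 < w₀) :
    ∃ C > 0, ∀ w, w₀ ≤ w → C * w ^ h ≤ gr h w := by
  refine ⟨w₀ / (w₀ + h), by positivity, fun w hw => ?_⟩
  have hw' : 0 < w := hw₀.trans_le hw
  refine le_trans ?_ (le_gr hh hw')
  rw [mul_comm]
  gcongr ?_ * ?_
  rw [div_le_div_iff₀ (by positivity) (by positivity)]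
  nlinarith

/-- Quotients of values of `w ↦ Γ(w+h)/Γ(w)` at comparable arguments are bounded below. -/
lemma gr_ratio_ge {h w₀ κ : ℝ} (hh : 0 < h) (hw₀ : 0 < w₀) (hκ : 0 < κ) :
    ∃ c > 0, ∀ b t, w₀ ≤ b → w₀ ≤ t → κ * t ≤ b → c ≤ gr h b / gr h t := by
  obtain ⟨C, hC, h1⟩ := gr_le_rpow hh hw₀
  obtain ⟨D, hD, h2⟩ := rpow_le_gr hh hw₀
  refine ⟨D * κ ^ h / C, by positivity, fun b t hb ht hbt => ?_⟩
  have ht0 := hw₀.trans_le ht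
  rw [le_div_iff₀ (gr_pos hh ht0)]
  calc D * κ ^ h / C * gr h t ≤ D * κ ^ h / C * (C * t ^ h) := by
        gcongr
        exact h1 t ht
    _ = D * (κ * t) ^ h := by
        rw [Real.mul_rpow hκ.le ht0.le]
        field_simp
    _ ≤ D * b ^ h := by gcongr
    _ ≤ gr h b := h2 b hb

/-- Iterating `Γ(x+1) = xΓ(x)`: each of `n` unit shifts gains a factor at least `1 + δ`, with
`δ` bounding from below the gains over all arguments up to `B`. -/
lemma gr_gain {u v B : ℝ} (hu : 0 < u) (hv : 0 < v) (n : ℕ) :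
    ∀ S : ℝ, 0 < S → S + n ≤ B →
      gr v S * (1 + u * v / (B * (B + u + v))) ^ n ≤ gr v (S + u) := by
  induction n with
  | zero => intro S hS _; simpa using gr_mono hv hS hu
  | succ n ih =>
    intro S hS hB
    push_cast at hB
    have hB0 : 0 < B := by have : (0:ℝ) ≤ n := Nat.cast_nonneg n
                           linarith
    have hSB : S ≤ B := by have : (0:ℝ) ≤ n := Nat.cast_nonneg n
                           linarith
    have h1 := ih (S + 1) (by positivity) (by linarith)
    rw [gr_succ hv hS, show S + 1 + u = S + u + 1 by ring, gr_succ hv (by positivity)] at h1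
    set δ := u * v / (B * (B + u + v)) with hδ
    have hδ0 : 0 ≤ δ := by positivity
    have h2 : 1 + δ ≤ (S + u) * (S + v) / (S * (S + u + v)) := by
      have : (S + u) * (S + v) / (S * (S + u + v)) = 1 + u * v / (S * (S + u + v)) := by
        field_simp; ring
      rw [this, hδ]
      gcongr
    have hg := gr_pos hv hS
    calc gr v S * (1 + δ) ^ (n + 1) = gr v S * (1 + δ) ^ n * (1 + δ) := by ring
      _ ≤ gr v S * (1 + δ) ^ n * ((S + u) * (S + v) / (S * (S + u + v))) := by gcongr
      _ = (gr v S * ((S + v) / S) * (1 + δ) ^ n) * ((S + u) / (S + u + v)) := by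
        field_simp
      _ ≤ (gr v (S + u) * ((S + u + v) / (S + u))) * ((S + u) / (S + u + v)) := by gcongr
      _ = gr v (S + u) := by field_simp

/-- The defect `1 - Γ(S+u)Γ(S+v)/(Γ(S)Γ(S+u+v))` is at least of order `1/S`. -/
lemma defect_lower {u v : ℝ} (hu : 0 < u) (hv : 0 < v) :
    ∃ c > 0, ∀ S : ℝ, 1 ≤ S → c / S ≤ 1 - gr v S / gr v (S + u) := by
  set c := u * v / (3 * (3 + u + v)) with hc
  have hc0 : 0 < c := by positivity
  refine ⟨c / (1 + c), by positivity, fun S hS => ?_⟩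
  have hS0 : 0 < S := by linarith
  have hg := gr_pos hv hS0
  have hg' := gr_pos hv (show 0 < S + u by positivity)
  have h1 := gr_gain (B := 3 * S) hu hv ⌈S⌉₊ S hS0
    (by have := Nat.ceil_lt_add_one hS0.le
        linarith)
  have h2 : 1 + c / S ≤ (1 + u * v / (3 * S * (3 * S + u + v))) ^ ⌈S⌉₊ := by
    have hpos : 0 ≤ u * v / (3 * S * (3 * S + u + v)) := by positivity
    refine le_trans ?_ (one_add_mul_le_pow (by linarith) _)
    have : S * (u * v / (3 * S * (3 * S + u + v))) ≤
        ⌈S⌉₊ * (u * v / (3 * S * (3 * S + u + v))) := by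
      gcongr
      exact Nat.le_ceil S
    refine le_trans ?_ (add_le_add_right this 1)
    have e : S * (u * v / (3 * S * (3 * S + u + v))) = u * v / (3 * (3 * S + u + v)) := by
      field_simp
    rw [e, hc, div_div]
    gcongr 1 + ?_
    apply div_le_div_of_nonneg_left (by positivity) (by positivity)
    nlinarith
  have h3 : gr v S * (1 + c / S) ≤ gr v (S + u) :=
    le_trans (by gcongr) h1
  have h4 : gr v S / gr v (S + u) ≤ 1 / (1 + c / S) := by
    rw [div_le_div_iff₀ hg' (by positivity)]; linarith
  have h5 : c / (1 + c) / S ≤ 1 - 1 / (1 + c / S) := by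
    have : 1 - 1 / (1 + c / S) = c / (S + c) := by field_simp; ring
    rw [this, div_div]
    apply div_le_div_of_nonneg_left hc0.le (by positivity)
    nlinarith
  linarith

/-- The defect `1 - Γ(S+u)Γ(S+v)/(Γ(S)Γ(S+u+v))` is nonnegative and `O(1/S)`. -/
lemma defect_upper {u v : ℝ} (hu : 0 < u) (hv : 0 < v) :
    ∃ C > 0, ∀ S : ℝ, 0 < S →
      0 ≤ 1 - gr v S / gr v (S + u) ∧ 1 - gr v S / gr v (S + u) ≤ C / S := by
  set N : ℝ := u + (⌈v⌉₊ + 1 : ℕ) with hN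
  have hN0 : 0 < N := by positivity
  refine ⟨v * (N + 1), by positivity, fun S hS => ?_⟩
  have hg := gr_pos hv hS
  have hg' := gr_pos hv (show 0 < S + u by positivity)
  refine ⟨sub_nonneg.2 ((div_le_one hg').2 (gr_mono hv hS hu)), ?_⟩
  have h1 : (S / (S + N)) ^ v * (S / (S + v)) ≤ gr v S / gr v (S + u) := by
    rw [Real.div_rpow hS.le (by positivity), div_mul_eq_mul_div]
    have := gr_le hv (show 0 < S + u by positivity)
    rw [add_assoc] at this
    exact div_le_div₀ hg.le (le_gr hv hS) hg' this
  have h2 : 1 - (S / (S + N)) ^ v ≤ v * N / S := by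
    have hy : 0 < S / (S + N) := by positivity
    have a1 := Real.one_sub_inv_le_log_of_pos hy
    have a2 := Real.add_one_le_exp (Real.log (S / (S + N)) * v)
    rw [← Real.rpow_def_of_pos hy] at a2
    have a3 : 1 - (S / (S + N))⁻¹ = - (N / S) := by field_simp; ring
    rw [a3] at a1
    have := mul_le_mul_of_nonneg_right a1 hv.le
    have e : v * N / S = N / S * v := by ring
    rw [e]; linarith
  have h3 : 1 - S / (S + v) ≤ v / S := by
    have : 1 - S / (S + v) = v / (S + v) := by field_simp; ring
    rw [this]
    apply div_le_div_of_nonneg_left hv.le hS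
    linarith
  have h4 : (S / (S + N)) ^ v ≤ 1 :=
    Real.rpow_le_one (by positivity) ((div_le_one (by positivity)).2 (by linarith)) hv.le
  have h5 : S / (S + v) ≤ 1 := (div_le_one (by positivity)).2 (by linarith)
  have e : v * (N + 1) / S = v * N / S + v / S := by field_simp
  rw [e]
  nlinarith [mul_nonneg (sub_nonneg.2 h4) (sub_nonneg.2 h5)]

/-! ### Summation over `ℕ^ι` -/

/-- Product series over `ℕ^ι`. -/
lemma summable_pi_prod {ι : Type*} [Fintype ι] {f : ℕ → ℝ} (h0 : ∀ n, 0 ≤ f n)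
    (hf : Summable f) : Summable (fun α : ι → ℕ => ∏ i, f (α i)) := by
  classical
  refine summable_of_sum_le (c := ∏ _i : ι, ∑' n, f n)
    (fun α => Finset.prod_nonneg fun i _ => h0 _) fun s => ?_
  have hsub : s ⊆ Fintype.piFinset (fun i => s.image (fun α => α i)) := by
    intro α hα
    rw [Fintype.mem_piFinset]
    exact fun i => Finset.mem_image_of_mem _ hα
  refine (Finset.sum_le_sum_of_subset_of_nonneg hsub
    (fun α _ _ => Finset.prod_nonneg fun i _ => h0 _)).trans ?_
  rw [← Finset.prod_univ_sum (fun i => s.image (fun α => α i)) (fun _ n => f n)]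
  exact Finset.prod_le_prod (fun i _ => Finset.sum_nonneg fun _ _ => h0 _)
    (fun i _ => hf.sum_le_tsum _ (fun _ _ => h0 _))

/-- A function that is `O(1/α_i)` for every coordinate has summable `q`-th powers
as soon as `q` exceeds the dimension. -/
lemma summable_of_bound {ι : Type*} [Fintype ι] [Nonempty ι] {f : (ι → ℕ) → ℝ} {C q : ℝ}
    (h0 : ∀ α, 0 ≤ f α) (hf : ∀ α i, f α ≤ C / ((α i : ℝ) + 1))
    (hq : (Fintype.card ι : ℝ) < q) : Summable (fun α => f α ^ q) := by
  set d : ℝ := (Fintype.card ι : ℝ) with hd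
  have hd0 : 0 < d := by rw [hd]; exact_mod_cast Fintype.card_pos
  have hq0 : 0 < q := hd0.trans hq
  have hC : 0 ≤ C := by
    have i : ι := Classical.arbitrary ι
    have := (h0 (fun _ => 0)).trans (hf (fun _ => 0) i)
    simpa using this
  have hs : Summable (fun n : ℕ => (C / ((n : ℝ) + 1)) ^ (q / d)) := by
    have h1 : Summable (fun n : ℕ => 1 / ((n : ℝ)) ^ (q / d)) :=
      Real.summable_one_div_nat_rpow.2 ((one_lt_div hd0).2 hq)
    have h2 := ((summable_nat_add_iff 1).2 h1).mul_left (C ^ (q / d))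
    refine h2.congr fun n => ?_
    rw [Real.div_rpow hC (by positivity)]
    push_cast
    ring
  refine (summable_pi_prod (ι := ι) (fun n => by positivity) hs).of_nonneg_of_le
    (fun α => Real.rpow_nonneg (h0 α) _) fun α => ?_
  have e : f α ^ q = ∏ _i : ι, f α ^ (q / d) := by
    rw [Finset.prod_const, Finset.card_univ, ← Real.rpow_natCast, ← Real.rpow_mul (h0 α),
      ← hd, div_mul_cancel₀ _ hd0.ne']
  rw [e]
  exact Finset.prod_le_prod (fun i _ => Real.rpow_nonneg (h0 α) _)
    (fun i _ => Real.rpow_le_rpow (h0 α) (hf α i) (by positivity))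

/-- A nonnegative function that is at least `c/N` on each box `[N, 2N)^ι` has
non-summable `q`-th powers for `0 < q ≤ |ι|`: every such box contributes at least `c^q`. -/
lemma not_summable_of_bound {ι : Type*} [Fintype ι] [Nonempty ι] {f : (ι → ℕ) → ℝ} {c q : ℝ}
    (hc : 0 < c)
    (hf : ∀ (N : ℕ) (α : ι → ℕ), 1 ≤ N → (∀ i, N ≤ α i ∧ α i < 2 * N) → c / N ≤ f α)
    (hq0 : 0 < q) (hq : q ≤ (Fintype.card ι : ℝ)) : ¬ Summable (fun α => f α ^ q) := by
  classical
  intro h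
  obtain ⟨s, hs⟩ := summable_iff_vanishing.1 h (Set.Iio (c ^ q)) (Iio_mem_nhds (by positivity))
  have i₀ : ι := Classical.arbitrary ι
  -- beyond every multi-index of the exceptional finite set
  set N : ℕ := s.sup (fun α => α i₀) + 1 with hN
  have hN1 : (1 : ℝ) ≤ N := by exact_mod_cast (by omega : 1 ≤ N)
  set t : Finset (ι → ℕ) := Fintype.piFinset (fun _ => Finset.Ico N (2 * N)) with ht
  have hdis : Disjoint t s := by
    rw [Finset.disjoint_left]
    intro α hα hαs
    have h1 := (Finset.mem_Ico.1 (Fintype.mem_piFinset.1 hα i₀)).1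
    have h2 : α i₀ ≤ s.sup (fun α => α i₀) := Finset.le_sup (f := fun α : ι → ℕ => α i₀) hαs
    omega
  have hlt : ∑ α ∈ t, f α ^ q < c ^ q := hs t hdis
  have hge : ∀ α ∈ t, (c / N) ^ q ≤ f α ^ q := fun α hα =>
    Real.rpow_le_rpow (by positivity)
      (hf N α (by omega) fun i => Finset.mem_Ico.1 (Fintype.mem_piFinset.1 hα i)) hq0.le
  have hsum := Finset.card_nsmul_le_sum t _ _ hge
  have hcard : t.card = N ^ Fintype.card ι := by
    rw [ht, Fintype.card_piFinset]
    simp [two_mul]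
  rw [hcard, nsmul_eq_mul, Real.div_rpow hc.le (by positivity)] at hsum
  have hNq : (N : ℝ) ^ q ≤ (N ^ Fintype.card ι : ℕ) := by
    push_cast
    rw [← Real.rpow_natCast]
    exact Real.rpow_le_rpow_of_exponent_le hN1 hq
  have hpos : 0 < (N : ℝ) ^ q := by positivity
  have : c ^ q ≤ (N ^ Fintype.card ι : ℕ) * (c ^ q / (N : ℝ) ^ q) := by
    rw [mul_div_assoc', le_div_iff₀ hpos, mul_comm]
    gcongr
  linarith

/-! ### Ratios of `ω₂` and the size of `ν` -/

section Egg

variable {K : ℕ} {m : Fin K → ℕ} (p : (k : Fin K) → Fin (m k) → ℝ) (a : Fin K → ℝ)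

/-- `(β_y + 1) / p_y`. -/
noncomputable def bb (β : (Σ k : Fin K, Fin (m k)) → ℕ) (y : Σ k : Fin K, Fin (m k)) : ℝ :=
  ((β y : ℝ) + 1) / p y.1 y.2

/-- `∑_j (β_{jk} + 1) / p_{jk}`, the sum over the block `k`. -/
noncomputable def tt (β : (Σ k : Fin K, Fin (m k)) → ℕ) (k : Fin K) : ℝ :=
  ∑ j, ((β ⟨k, j⟩ : ℝ) + 1) / p k j

/-- `s_k(β) = ∑_j (β_{jk} + 1) / (a_k p_{jk})`. -/
noncomputable def ss (β : (Σ k : Fin K, Fin (m k)) → ℕ) (k : Fin K) : ℝ :=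
  ∑ j, ((β ⟨k, j⟩ : ℝ) + 1) / (a k * p k j)

/-- `∑_k s_k(β)`. -/
noncomputable def TT (β : (Σ k : Fin K, Fin (m k)) → ℕ) : ℝ := ∑ k, ss p a β k

/-- The multi-index `β + e_y`. -/
def inc (β : (Σ k : Fin K, Fin (m k)) → ℕ) (y : Σ k : Fin K, Fin (m k)) :
    (Σ k : Fin K, Fin (m k)) → ℕ := Function.update β y (β y + 1)

/-- The increment `1 / (a_k p_{jk})` of `s_k` under `β ↦ β + e_{jk}`. -/
noncomputable def cc (y : Σ k : Fin K, Fin (m k)) : ℝ := 1 / (a y.1 * p y.1 y.2)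

/-- The ratio `ω₂(β + e_y) / ω₂(β)`, written with quotients of Gamma values. -/
noncomputable def rho (y : Σ k : Fin K, Fin (m k)) (β : (Σ k : Fin K, Fin (m k)) → ℕ) : ℝ :=
  gr (1 / p y.1 y.2) (bb p β y) / gr (1 / p y.1 y.2) (tt p β y.1) *
    (gr (cc p a y) (ss p a β y.1) / gr (cc p a y) (TT p a β + 1))

lemma prod_eq_mul_of_single {κ : Type*} [Fintype κ] [DecidableEq κ] {f f' : κ → ℝ} (k₀ : κ)
    {r : ℝ} (h : ∀ k, k ≠ k₀ → f' k = f k) (h0 : f' k₀ = f k₀ * r) :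
    ∏ k, f' k = (∏ k, f k) * r := by
  rw [← Finset.mul_prod_erase _ f (Finset.mem_univ k₀),
    ← Finset.mul_prod_erase _ f' (Finset.mem_univ k₀), h0,
    Finset.prod_congr rfl (fun k hk => h k (Finset.ne_of_mem_erase hk))]
  ring

lemma sum_eq_add_of_single {κ : Type*} [Fintype κ] [DecidableEq κ] {f f' : κ → ℝ} (k₀ : κ)
    {r : ℝ} (h : ∀ k, k ≠ k₀ → f' k = f k) (h0 : f' k₀ = f k₀ + r) :
    ∑ k, f' k = (∑ k, f k) + r := by
  rw [← Finset.add_sum_erase _ f (Finset.mem_univ k₀),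
    ← Finset.add_sum_erase _ f' (Finset.mem_univ k₀), h0,
    Finset.sum_congr rfl (fun k hk => h k (Finset.ne_of_mem_erase hk))]
  ring

lemma inc_self (β : (Σ k : Fin K, Fin (m k)) → ℕ) (y) : inc β y y = β y + 1 := by
  simp [inc]

lemma inc_ne (β : (Σ k : Fin K, Fin (m k)) → ℕ) {y z} (h : z ≠ y) : inc β y z = β z := by
  simp [inc, h]

lemma sigma_ne {y : Σ k : Fin K, Fin (m k)} {k : Fin K} (h : k ≠ y.1) (j : Fin (m k)) :
    (⟨k, j⟩ : Σ k : Fin K, Fin (m k)) ≠ y := by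
  rintro rfl
  exact h rfl

lemma sigma_ne' {y : Σ k : Fin K, Fin (m k)} {j : Fin (m y.1)} (h : j ≠ y.2) :
    (⟨y.1, j⟩ : Σ k : Fin K, Fin (m k)) ≠ y := by
  obtain ⟨k, i⟩ := y
  intro e
  simp at e
  exact h e

variable (β : (Σ k : Fin K, Fin (m k)) → ℕ)

lemma bb_inc_self (y) : bb p (inc β y) y = bb p β y + 1 / p y.1 y.2 := by
  simp only [bb, inc_self]
  push_cast
  ring

lemma bb_inc_ne {y z} (h : z ≠ y) : bb p (inc β y) z = bb p β z := by
  simp only [bb, inc_ne β h]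

lemma tt_inc_ne {y : Σ k : Fin K, Fin (m k)} {k} (h : k ≠ y.1) :
    tt p (inc β y) k = tt p β k := by
  simp only [tt, inc_ne β (sigma_ne h _)]

lemma tt_inc_self (y : Σ k : Fin K, Fin (m k)) :
    tt p (inc β y) y.1 = tt p β y.1 + 1 / p y.1 y.2 := by
  refine sum_eq_add_of_single y.2 (fun j hj => ?_) ?_
  · rw [inc_ne β (sigma_ne' hj)]
  · rw [show (⟨y.1, y.2⟩ : Σ k : Fin K, Fin (m k)) = y from rfl, inc_self]
    push_cast; ring

lemma ss_inc_ne {y : Σ k : Fin K, Fin (m k)} {k} (h : k ≠ y.1) :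
    ss p a (inc β y) k = ss p a β k := by
  simp only [ss, inc_ne β (sigma_ne h _)]

lemma ss_inc_self (y : Σ k : Fin K, Fin (m k)) :
    ss p a (inc β y) y.1 = ss p a β y.1 + cc p a y := by
  refine sum_eq_add_of_single y.2 (fun j hj => ?_) ?_
  · rw [inc_ne β (sigma_ne' hj)]
  · rw [show (⟨y.1, y.2⟩ : Σ k : Fin K, Fin (m k)) = y from rfl, inc_self, cc]
    push_cast; ring

lemma TT_inc (y : Σ k : Fin K, Fin (m k)) :
    TT p a (inc β y) = TT p a β + cc p a y :=
  sum_eq_add_of_single y.1 (fun _ hk => ss_inc_ne p a β hk) (ss_inc_self p a β y)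

lemma omegaTwo_eq : omegaTwo K m p a β =
    (Real.pi ^ (∑ k, m k) / ∏ k, ∏ j, p k j) * (1 / ∏ k, a k) *
      (∏ k, (∏ j, Real.Gamma (bb p β ⟨k, j⟩)) / Real.Gamma (tt p β k)) *
      ((∏ k, Real.Gamma (ss p a β k)) / Real.Gamma (TT p a β)) / TT p a β := rfl

variable {p a} (hp : ∀ k j, 0 < p k j) (ha : ∀ k, 0 < a k)
include hp

lemma bb_pos (y) : 0 < bb p β y := by
  have := hp y.1 y.2
  unfold bb; positivity

lemma bb_le_tt (y : Σ k : Fin K, Fin (m k)) : bb p β y ≤ tt p β y.1 :=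
  Finset.single_le_sum (f := fun j => ((β ⟨y.1, j⟩ : ℝ) + 1) / p y.1 j)
    (fun j _ => (bb_pos β hp ⟨y.1, j⟩).le) (Finset.mem_univ y.2)

lemma tt_pos (y : Σ k : Fin K, Fin (m k)) : 0 < tt p β y.1 :=
  (bb_pos β hp y).trans_le (bb_le_tt β hp y)

include ha

lemma cc_pos (y : Σ k : Fin K, Fin (m k)) : 0 < cc p a y := by
  have := hp y.1 y.2
  have := ha y.1
  unfold cc; positivity

lemma ss_nonneg (k : Fin K) : 0 ≤ ss p a β k := by
  refine Finset.sum_nonneg fun j _ => ?_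
  have := hp k j
  have := ha k
  positivity

lemma cc_le_ss (y : Σ k : Fin K, Fin (m k)) : cc p a y * (β y + 1) ≤ ss p a β y.1 := by
  have h : ∀ j ∈ Finset.univ, 0 ≤ ((β ⟨y.1, j⟩ : ℝ) + 1) / (a y.1 * p y.1 j) := by
    intro j _
    have := hp y.1 j
    have := ha y.1
    positivity
  refine le_trans (le_of_eq ?_) (Finset.single_le_sum h (Finset.mem_univ y.2))
  rw [cc, div_mul_eq_mul_div, one_mul]

lemma ss_pos (y : Σ k : Fin K, Fin (m k)) : 0 < ss p a β y.1 :=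
  lt_of_lt_of_le (by have := cc_pos hp ha y; positivity) (cc_le_ss β hp ha y)

lemma ss_le_TT (k : Fin K) : ss p a β k ≤ TT p a β :=
  Finset.single_le_sum (f := fun k => ss p a β k) (fun k _ => ss_nonneg β hp ha k)
    (Finset.mem_univ k)

lemma TT_pos (y : Σ k : Fin K, Fin (m k)) : 0 < TT p a β :=
  (ss_pos β hp ha y).trans_le (ss_le_TT β hp ha y.1)

lemma rho_pos (y : Σ k : Fin K, Fin (m k)) : 0 < rho p a y β := by
  have h1 : 0 < 1 / p y.1 y.2 := by have := hp y.1 y.2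
                                    positivity
  have h2 := cc_pos hp ha y
  have := gr_pos h1 (bb_pos β hp y)
  have := gr_pos h1 (tt_pos β hp y)
  have := gr_pos h2 (ss_pos β hp ha y)
  have := gr_pos h2 (show 0 < TT p a β + 1 by have := TT_pos β hp ha y
                                              positivity)
  unfold rho
  positivity

lemma omegaTwo_pos (hm : ∀ k, 0 < m k) (y : Σ k : Fin K, Fin (m k)) : 0 < omegaTwo K m p a β := by
  rw [omegaTwo_eq]
  have hT := TT_pos β hp ha y
  have h1 : 0 < ∏ k, ∏ j, p k j := Finset.prod_pos fun k _ => Finset.prod_pos fun j _ => hp k j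
  have h2 : 0 < ∏ k, a k := Finset.prod_pos fun k _ => ha k
  have h3 : 0 < ∏ k, (∏ j, Real.Gamma (bb p β ⟨k, j⟩)) / Real.Gamma (tt p β k) :=
    Finset.prod_pos fun k _ => div_pos
      (Finset.prod_pos fun j _ => Real.Gamma_pos_of_pos (bb_pos β hp _))
      (Real.Gamma_pos_of_pos (tt_pos β hp ⟨k, ⟨0, hm k⟩⟩))
  have h4 : 0 < ∏ k, Real.Gamma (ss p a β k) :=
    Finset.prod_pos fun k _ => Real.Gamma_pos_of_pos (ss_pos β hp ha ⟨k, ⟨0, hm k⟩⟩)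
  have h5 := Real.Gamma_pos_of_pos hT
  have := Real.pi_pos
  positivity

lemma omegaTwo_inc (y : Σ k : Fin K, Fin (m k)) :
    omegaTwo K m p a (inc β y) = omegaTwo K m p a β * rho p a y β := by
  have hT := TT_pos β hp ha y
  have hc := cc_pos hp ha y
  have h1 : ∏ k, (∏ j, Real.Gamma (bb p (inc β y) ⟨k, j⟩)) / Real.Gamma (tt p (inc β y) k) =
      (∏ k, (∏ j, Real.Gamma (bb p β ⟨k, j⟩)) / Real.Gamma (tt p β k)) *
        (gr (1 / p y.1 y.2) (bb p β y) / gr (1 / p y.1 y.2) (tt p β y.1)) := by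
    refine prod_eq_mul_of_single y.1 (fun k hk => ?_) ?_
    · rw [tt_inc_ne p β hk]
      congr 1
      exact Finset.prod_congr rfl fun j _ => by rw [bb_inc_ne p β (sigma_ne hk j)]
    · have h2 : ∏ j, Real.Gamma (bb p (inc β y) ⟨y.1, j⟩) =
          (∏ j, Real.Gamma (bb p β ⟨y.1, j⟩)) * gr (1 / p y.1 y.2) (bb p β y) := by
        refine prod_eq_mul_of_single y.2 (fun j hj => ?_) ?_
        · rw [bb_inc_ne p β (sigma_ne' hj)]
        · rw [show (⟨y.1, y.2⟩ : Σ k : Fin K, Fin (m k)) = y from rfl, bb_inc_self, gr,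
            mul_div_cancel₀]
          exact (Real.Gamma_pos_of_pos (bb_pos β hp y)).ne'
      rw [h2, tt_inc_self, gr, gr]
      have := (Real.Gamma_pos_of_pos (tt_pos β hp y)).ne'
      field_simp
  have h3 : ∏ k, Real.Gamma (ss p a (inc β y) k) =
      (∏ k, Real.Gamma (ss p a β k)) * gr (cc p a y) (ss p a β y.1) := by
    refine prod_eq_mul_of_single y.1 (fun k hk => by rw [ss_inc_ne p a β hk]) ?_
    rw [ss_inc_self, gr, mul_div_cancel₀]
    exact (Real.Gamma_pos_of_pos (ss_pos β hp ha y)).ne'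
  rw [omegaTwo_eq, omegaTwo_eq, h1, h3, TT_inc, rho]
  have h4 : gr (cc p a y) (TT p a β + 1) = ((TT p a β + cc p a y) *
      Real.Gamma (TT p a β + cc p a y)) / (TT p a β * Real.Gamma (TT p a β)) := by
    rw [gr, Real.Gamma_add_one hT.ne', add_right_comm, Real.Gamma_add_one (by positivity)]
  rw [h4]
  have h5 := (Real.Gamma_pos_of_pos hT).ne'
  have h6 := (Real.Gamma_pos_of_pos (add_pos hT hc)).ne'
  have h7 := (add_pos hT hc).ne'
  set P := ∏ k, Real.Gamma (ss p a β k)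
  set Q := ∏ k, (∏ j, Real.Gamma (bb p β ⟨k, j⟩)) / Real.Gamma (tt p β k)
  set g := gr (1 / p y.1 y.2) (bb p β y) / gr (1 / p y.1 y.2) (tt p β y.1)
  set c := Real.pi ^ (∑ k, m k) / (∏ k, ∏ j, p k j) * (1 / ∏ k, a k)
  field_simp

/-- Raising a coordinate of another block changes the ratio `ω₂(β + e_y)/ω₂(β)` only through
the total `∑_k s_k`. -/
lemma rho_inc {x y : Σ k : Fin K, Fin (m k)} (hxy : x.1 ≠ y.1) :
    rho p a y (inc β x) = rho p a y β *
      (gr (cc p a y) (TT p a β + 1) / gr (cc p a y) (TT p a β + 1 + cc p a x)) := by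
  have hT := TT_pos β hp ha y
  have hc := cc_pos hp ha y
  have h1 := (gr_pos hc (show 0 < TT p a β + 1 by positivity)).ne'
  rw [rho, rho, tt_inc_ne p β hxy.symm, ss_inc_ne p a β hxy.symm, TT_inc,
    bb_inc_ne p β (fun e => hxy (by rw [e])), add_right_comm (TT p a β)]
  field_simp

/-- The closed form `ν(β + e_y) = √(ρ_x ρ_y) (1 - R)`, where `ρ_x, ρ_y` are the ratios
`ω₂(β + e_x)/ω₂(β)`, `ω₂(β + e_y)/ω₂(β)` and
`R = ω₂(β) ω₂(β + e_x + e_y) / (ω₂(β + e_x) ω₂(β + e_y))`. -/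
lemma nuTwo_inc (hm : ∀ k, 0 < m k) {x y : Σ k : Fin K, Fin (m k)} (hxy : x.1 ≠ y.1) :
    nuTwo K m p a x y (inc β y) = Real.sqrt (rho p a x β * rho p a y β) *
      (1 - gr (cc p a y) (TT p a β + 1) / gr (cc p a y) (TT p a β + 1 + cc p a x)) := by
  have hne : x ≠ y := fun e => hxy (by rw [e])
  have e1 : Function.update (inc β y) y (inc β y y - 1) = β := by
    funext z
    by_cases h : z = y <;> simp [inc, h]
  have e2 : Function.update (Function.update (inc β y) x (inc β y x + 1)) y (inc β y y - 1) =
      inc β x := by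
    funext z
    by_cases h : z = y
    · subst h; simp [inc, hne.symm]
    · by_cases h' : z = x
      · subst h'; simp [inc, h]
      · simp [inc, h, h']
  have e3 : Function.update (inc β y) x (inc β y x + 1) = inc (inc β x) y := by
    funext z
    by_cases h : z = y
    · subst h; simp [inc, hne.symm]
    · by_cases h' : z = x
      · subst h'; simp [inc, h]
      · simp [inc, h, h']
  rw [nuTwo, if_neg (by rw [inc_self]; omega), e1, e2, e3, omegaTwo_inc (inc β x) hp ha,
    omegaTwo_inc β hp ha, omegaTwo_inc β hp ha, rho_inc β hp ha hxy]
  have hw := omegaTwo_pos β hp ha hm y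
  have hx := rho_pos β hp ha x
  have hy := rho_pos β hp ha y
  have hT := TT_pos β hp ha y
  have hc := cc_pos hp ha y
  have hd := (defect_upper (cc_pos hp ha x) hc).choose_spec.2 (TT p a β + 1) (by positivity)
  have hR : 0 < gr (cc p a y) (TT p a β + 1) / gr (cc p a y) (TT p a β + 1 + cc p a x) :=
    div_pos (gr_pos hc (by positivity)) (gr_pos hc (by have := cc_pos hp ha x; positivity))
  set R := gr (cc p a y) (TT p a β + 1) / gr (cc p a y) (TT p a β + 1 + cc p a x)
  set w := omegaTwo K m p a β
  have f1 : w * rho p a y β * (w * rho p a x β) / w ^ 2 = rho p a x β * rho p a y β := by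
    field_simp
  have f2 : (w * rho p a x β * (rho p a y β * R)) ^ 2 / (w * rho p a y β * (w * rho p a x β)) =
      rho p a x β * rho p a y β * R ^ 2 := by
    field_simp
  rw [f1, f2, Real.sqrt_mul (mul_pos hx hy).le (R ^ 2), Real.sqrt_sq hR.le, ← mul_one_sub,
    abs_of_nonneg (mul_nonneg (Real.sqrt_nonneg _) hd.1)]

lemma rho_le_one (y : Σ k : Fin K, Fin (m k)) : rho p a y β ≤ 1 := by
  have h1 : 0 < 1 / p y.1 y.2 := one_div_pos.2 (hp y.1 y.2)
  have h2 := cc_pos hp ha y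
  have hb := bb_pos β hp y
  have ht := tt_pos β hp y
  have hs := ss_pos β hp ha y
  have hT := TT_pos β hp ha y
  have hsT := ss_le_TT β hp ha y.1
  refine mul_le_one₀ ?_ (div_pos (gr_pos h2 hs) (gr_pos h2 (by positivity))).le ?_
  · exact (div_le_one (gr_pos h1 ht)).2 (gr_mono' h1 hb (bb_le_tt β hp y))
  · exact (div_le_one (gr_pos h2 (by positivity))).2 (gr_mono' h2 hs (by linarith))

omit ha in
lemma tt_le {B : ℝ} (hB : ∀ i, (β i : ℝ) + 1 ≤ B) (k : Fin K) :
    tt p β k ≤ B * ∑ j, 1 / p k j := by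
  rw [Finset.mul_sum]
  refine Finset.sum_le_sum fun j _ => ?_
  have := hp k j
  rw [mul_one_div]
  gcongr
  exact hB _

lemma TT_le {B : ℝ} (hB : ∀ i, (β i : ℝ) + 1 ≤ B) :
    TT p a β ≤ B * ∑ k, ∑ j, 1 / (a k * p k j) := by
  rw [Finset.mul_sum]
  refine Finset.sum_le_sum fun k _ => ?_
  rw [Finset.mul_sum]
  refine Finset.sum_le_sum fun j _ => ?_
  have := hp k j
  have := ha k
  rw [mul_one_div]
  gcongr
  exact hB _

lemma sum_recip_nonneg : 0 ≤ ∑ k, ∑ j, 1 / (a k * p k j) := by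
  refine Finset.sum_nonneg fun k _ => Finset.sum_nonneg fun j _ => ?_
  have := hp k j
  have := ha k
  positivity

omit β in
/-- On boxes where all coordinates have the same order of magnitude, the ratio
`ω₂(β + e_y)/ω₂(β)` is bounded away from zero. -/
lemma rho_ge (y : Σ k : Fin K, Fin (m k)) :
    ∃ c > 0, ∀ (N : ℕ) (β : (Σ k : Fin K, Fin (m k)) → ℕ), 1 ≤ N →
      (∀ i, N ≤ β i + 1 ∧ β i + 1 ≤ 2 * N) → c ≤ rho p a y β := by
  have hpy := hp y.1 y.2
  have h1 : 0 < 1 / p y.1 y.2 := one_div_pos.2 hpy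
  have h2 := cc_pos hp ha y
  set P := ∑ j, 1 / p y.1 j with hP
  have hP0 : 0 < P := h1.trans_le (Finset.single_le_sum (f := fun j => 1 / p y.1 j)
    (fun j _ => (one_div_pos.2 (hp y.1 j)).le) (Finset.mem_univ y.2))
  set Q := ∑ k, ∑ j, 1 / (a k * p k j) with hQ
  have hQ0 : 0 ≤ Q := sum_recip_nonneg hp ha
  obtain ⟨c₁, hc₁, H₁⟩ := gr_ratio_ge (κ := (1 / p y.1 y.2) / (2 * P)) h1 h1 (by positivity)
  obtain ⟨c₂, hc₂, H₂⟩ := gr_ratio_ge (κ := cc p a y / (2 * Q + 1)) h2 h2 (by positivity)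
  refine ⟨c₁ * c₂, by positivity, fun N β hN hβ => ?_⟩
  have hN1 : (1 : ℝ) ≤ N := by exact_mod_cast hN
  have hlo : (N : ℝ) ≤ β y + 1 := by exact_mod_cast (hβ y).1
  have hhi : ∀ i, (β i : ℝ) + 1 ≤ 2 * N := fun i => by exact_mod_cast (hβ i).2
  have hb : 1 / p y.1 y.2 * N ≤ bb p β y := by
    unfold bb
    rw [div_mul_eq_mul_div, one_mul]
    gcongr
  have hb1 : 1 / p y.1 y.2 ≤ bb p β y := le_trans (le_mul_of_one_le_right h1.le hN1) hb
  have hs : cc p a y * N ≤ ss p a β y.1 :=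
    le_trans (by gcongr) (cc_le_ss β hp ha y)
  have hs1 : cc p a y ≤ ss p a β y.1 := le_trans (le_mul_of_one_le_right h2.le hN1) hs
  have hsT := ss_le_TT β hp ha y.1
  have ht := tt_le β hp hhi y.1
  have hT := TT_le β hp ha hhi
  refine mul_le_mul (H₁ _ _ hb1 (hb1.trans (bb_le_tt β hp y)) ?_)
    (H₂ _ _ hs1 (by linarith) ?_) hc₂.le
    (div_pos (gr_pos h1 (bb_pos β hp y)) (gr_pos h1 (tt_pos β hp y))).le
  · refine le_trans ?_ hb
    calc 1 / p y.1 y.2 / (2 * P) * tt p β y.1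
        ≤ 1 / p y.1 y.2 / (2 * P) * (2 * N * P) := by gcongr
      _ = 1 / p y.1 y.2 * N := by field_simp
  · refine le_trans ?_ hs
    have : TT p a β + 1 ≤ N * (2 * Q + 1) := by rw [← hQ] at hT; linarith
    calc cc p a y / (2 * Q + 1) * (TT p a β + 1)
        ≤ cc p a y / (2 * Q + 1) * (N * (2 * Q + 1)) := by gcongr
      _ = cc p a y * N := by field_simp

omit hp ha β in
/-- Every multi-index with nonzero `y`-entry is of the form `β + e_y`. -/
lemma exists_inc {y : Σ k : Fin K, Fin (m k)} {α : (Σ k : Fin K, Fin (m k)) → ℕ}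
    (h : α y ≠ 0) : ∃ β, inc β y = α := by
  refine ⟨Function.update α y (α y - 1), ?_⟩
  funext z
  by_cases hz : z = y
  · subst hz; simp [inc]; omega
  · simp [inc, hz]

omit hp ha β in
lemma nuTwo_nonneg (x y : Σ k : Fin K, Fin (m k)) (α : (Σ k : Fin K, Fin (m k)) → ℕ) :
    0 ≤ nuTwo K m p a x y α := by
  unfold nuTwo
  split_ifs
  · exact le_rfl
  · exact abs_nonneg _

omit β in
lemma nuTwo_upper (hm : ∀ k, 0 < m k) {x y : Σ k : Fin K, Fin (m k)} (hxy : x.1 ≠ y.1) :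
    ∃ C, ∀ α i, nuTwo K m p a x y α ≤ C / ((α i : ℝ) + 1) := by
  haveI : Nonempty (Σ k : Fin K, Fin (m k)) := ⟨x⟩
  obtain ⟨i₀, hi₀⟩ := Finite.exists_min (fun i : Σ k : Fin K, Fin (m k) => cc p a i)
  set κ := min 1 (cc p a i₀) with hκ
  have hκ0 : 0 < κ := lt_min one_pos (cc_pos hp ha i₀)
  obtain ⟨D, hD, H⟩ := defect_upper (cc_pos hp ha x) (cc_pos hp ha y)
  refine ⟨D / κ, fun α i => ?_⟩
  by_cases h : α y = 0
  · rw [nuTwo, if_pos h]; positivity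
  · obtain ⟨β, rfl⟩ := exists_inc h
    have hT := TT_pos β hp ha y
    obtain ⟨h1, h2⟩ := H (TT p a β + 1) (by positivity)
    rw [nuTwo_inc β hp ha hm hxy]
    have h3 : Real.sqrt (rho p a x β * rho p a y β) ≤ 1 :=
      Real.sqrt_le_one.2 (mul_le_one₀ (rho_le_one β hp ha x) (rho_pos β hp ha y).le
        (rho_le_one β hp ha y))
    have h4 : (inc β y i : ℝ) ≤ β i + 1 := by
      by_cases hi : i = y
      · rw [hi, inc_self]; push_cast; exact le_rfl
      · rw [inc_ne β hi]; linarith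
    have h5 : κ * ((inc β y i : ℝ) + 1) ≤ TT p a β + 1 := by
      have k1 := (cc_le_ss β hp ha i).trans (ss_le_TT β hp ha i.1)
      have k2 : κ * ((β i : ℝ) + 1) ≤ cc p a i * (β i + 1) := by
        gcongr
        exact (min_le_right _ _).trans (hi₀ i)
      have k3 : κ ≤ 1 := min_le_left _ _
      nlinarith
    calc _ ≤ 1 * (D / (TT p a β + 1)) := mul_le_mul h3 h2 h1 zero_le_one
      _ ≤ D / (κ * ((inc β y i : ℝ) + 1)) := by rw [one_mul]; gcongr
      _ = D / κ / ((inc β y i : ℝ) + 1) := by rw [div_div]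

omit β in
lemma nuTwo_lower (hm : ∀ k, 0 < m k) {x y : Σ k : Fin K, Fin (m k)} (hxy : x.1 ≠ y.1) :
    ∃ c > 0, ∀ (N : ℕ) (α : (Σ k : Fin K, Fin (m k)) → ℕ), 1 ≤ N →
      (∀ i, N ≤ α i ∧ α i < 2 * N) → c / N ≤ nuTwo K m p a x y α := by
  obtain ⟨cx, hcx, Hx⟩ := rho_ge hp ha x
  obtain ⟨cy, hcy, Hy⟩ := rho_ge hp ha y
  obtain ⟨D, hD, H⟩ := defect_lower (cc_pos hp ha x) (cc_pos hp ha y)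
  set Q := ∑ k, ∑ j, 1 / (a k * p k j) with hQ
  have hQ0 : 0 ≤ Q := sum_recip_nonneg hp ha
  refine ⟨Real.sqrt (cx * cy) * (D / (2 * Q + 1)), by positivity, fun N α hN hα => ?_⟩
  have hN1 : (1 : ℝ) ≤ N := by exact_mod_cast hN
  obtain ⟨β, rfl⟩ := exists_inc (y := y) (α := α) (by have := (hα y).1; omega)
  have hβ : ∀ i, N ≤ β i + 1 ∧ β i + 1 ≤ 2 * N := by
    intro i
    have := hα i
    by_cases hi : i = y
    · subst hi; rw [inc_self] at this; omega
    · rw [inc_ne β hi] at this; omega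
  have hT0 := TT_pos β hp ha y
  have hT : TT p a β + 1 ≤ (2 * Q + 1) * N := by
    have := TT_le β hp ha (B := 2 * N) (fun i => by exact_mod_cast (hβ i).2)
    rw [← hQ] at this
    linarith
  rw [nuTwo_inc β hp ha hm hxy, mul_div_assoc, div_div]
  refine mul_le_mul (Real.sqrt_le_sqrt ?_) (le_trans ?_ (H _ (by linarith))) (by positivity)
    (Real.sqrt_nonneg _)
  · exact mul_le_mul (Hx N β hN hβ) (Hy N β hN hβ) hcy.le (rho_pos β hp ha x).le
  · gcongr

end Egg

/-- For `K ≥ 2`, the series `∑_{α ∈ ℕ^d} ν(α)^q`, with `ν` built from the first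
coordinates of the first and second blocks, converges iff `q > d`. -/
theorem cross_commutator_different_blocks_summable_iff_egg_two (K : ℕ) (hK : 1 < K)
    (m : Fin K → ℕ) (hm : ∀ k, 0 < m k)
    (p : (k : Fin K) → Fin (m k) → ℝ) (hp : ∀ k j, 0 < p k j)
    (a : Fin K → ℝ) (ha : ∀ k, 0 < a k)
    (d : ℕ) (hd : d = ∑ k, m k) (q : ℝ) (hq : 0 < q) :
    Summable (fun α : (Σ k : Fin K, Fin (m k)) → ℕ =>
        nuTwo K m p a ⟨⟨0, by omega⟩, ⟨0, hm ⟨0, by omega⟩⟩⟩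
          ⟨⟨1, hK⟩, ⟨0, hm ⟨1, hK⟩⟩⟩ α ^ q) ↔
      (d : ℝ) < q := by
  set x : Σ k : Fin K, Fin (m k) := ⟨⟨0, by omega⟩, ⟨0, hm ⟨0, by omega⟩⟩⟩ with hx
  set y : Σ k : Fin K, Fin (m k) := ⟨⟨1, hK⟩, ⟨0, hm ⟨1, hK⟩⟩⟩ with hy
  have hxy : x.1 ≠ y.1 := by simp [hx, hy]
  haveI : Nonempty (Σ k : Fin K, Fin (m k)) := ⟨x⟩
  have hcard : Fintype.card (Σ k : Fin K, Fin (m k)) = d := by simp [hd]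
  constructor
  · intro hsum
    by_contra hle
    obtain ⟨c, hc, hlow⟩ := nuTwo_lower hp ha hm hxy
    exact not_summable_of_bound hc hlow hq (by rw [hcard]; exact not_lt.1 hle) hsum
  · intro hdq
    obtain ⟨C, hup⟩ := nuTwo_upper hp ha hm hxy
    exact summable_of_bound (nuTwo_nonneg x y) hup (by rw [hcard]; exact hdq)
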